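/- Let U be a real Hilbert space, V a real normed vector space, B : U × U → ℝ a continuous symmetric bilinear form satisfying B(u,u) ≥ 0 for all u ∈ U, and K : U → V a compact continuous linear operator. Assume (i) a Gårding-type inequality holds: there exist constants α₀ > 0 and α₁ > 0 such that α₀‖u‖² ≤ B(u,u) + α₁‖K u‖² for all u ∈ U; and (ii) B has trivial kernel on the diagonal: B(u,u) = 0 implies u = 0. Then B is coercive: there exists a constant c > 0 such that c‖u‖² ≤ B(u,u) for all u ∈ U. -/

import Mathlib

/-!
If no constant works, rescaling gives unit vectors `u n` with `B (u n) (u n) → 0`, and compactness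
of `K` lets us assume that `K (u n)` converges. The Gårding inequality applied to the differences
`u m - u n`, together with `B (x - y) (x - y) ≤ 2 * (B x x + B y y)`, shows that `u` is Cauchy in
norm. Its limit `w` satisfies `‖w‖ = 1` and `B w w = 0`, contradicting the trivial kernel.
-/

open Filter Topology

theorem apply_sub_self_le_of_isNonneg {R M : Type*} [CommRing R] [PartialOrder R]
    [IsOrderedAddMonoid R] [AddCommGroup M] [Module R M] {B : LinearMap.BilinForm R M}
    (hB : B.IsNonneg) (x y : M) : B (x - y) (x - y) ≤ 2 * (B x x + B y y) := by
  have parallelogram : B (x + y) (x + y) + B (x - y) (x - y) = 2 * (B x x + B y y) := by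
    simp only [map_add, map_sub, LinearMap.add_apply, LinearMap.sub_apply]
    ring
  rw [← parallelogram]
  exact le_add_of_nonneg_left (hB.nonneg (x + y))

theorem exists_subseq_tendsto_of_isCompactOperator {𝕜 E F : Type*} [NontriviallyNormedField 𝕜]
    [SeminormedAddCommGroup E] [NormedSpace 𝕜 E] [AddCommMonoid F] [Module 𝕜 F]
    [TopologicalSpace F] [FirstCountableTopology F] [ContinuousConstSMul 𝕜 F] {K : E →ₗ[𝕜] F}
    (hK : IsCompactOperator K) {u : ℕ → E} (hu : Bornology.IsBounded (Set.range u)) :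
    ∃ a, ∃ φ : ℕ → ℕ, StrictMono φ ∧ Tendsto (fun n ↦ K (u (φ n))) atTop (𝓝 a) := by
  obtain ⟨S, hS, hKS⟩ := hK.image_subset_compact_of_bounded hu
  have hKu (n : ℕ) : K (u n) ∈ S := hKS (Set.mem_image_of_mem K (Set.mem_range_self n))
  obtain ⟨a, -, φ, hφ, hlim⟩ := hS.tendsto_subseq hKu
  exact ⟨a, φ, hφ, hlim⟩

section Garding

variable {U V : Type*} [SeminormedAddCommGroup U] [NormedSpace ℝ U] [SeminormedAddCommGroup V]
  [NormedSpace ℝ V] {B : LinearMap.BilinForm ℝ U} {K : U →ₗ[ℝ] V} {α₀ α₁ : ℝ}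

theorem mul_dist_sq_le_of_garding (hB : B.IsNonneg)
    (hGarding : ∀ u, α₀ * ‖u‖ ^ 2 ≤ B u u + α₁ * ‖K u‖ ^ 2) (x y : U) :
    α₀ * dist x y ^ 2 ≤ 2 * (B x x + B y y) + α₁ * dist (K x) (K y) ^ 2 := by
  calc α₀ * dist x y ^ 2
      ≤ B (x - y) (x - y) + α₁ * dist (K x) (K y) ^ 2 := by
        simpa only [dist_eq_norm, map_sub K] using hGarding (x - y)
    _ ≤ 2 * (B x x + B y y) + α₁ * dist (K x) (K y) ^ 2 := by
        gcongr
        exact apply_sub_self_le_of_isNonneg hB x y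

theorem cauchySeq_of_garding {ι : Type*} [Nonempty ι] [SemilatticeSup ι] (hB : B.IsNonneg)
    (hα₀ : 0 < α₀) (hGarding : ∀ u, α₀ * ‖u‖ ^ 2 ≤ B u u + α₁ * ‖K u‖ ^ 2) {u : ι → U}
    (hBu : Tendsto (fun i ↦ B (u i) (u i)) atTop (𝓝 0)) (hKu : CauchySeq fun i ↦ K (u i)) :
    CauchySeq u := by
  let bound (p : ι × ι) : ℝ :=
    2 * (B (u p.1) (u p.1) + B (u p.2) (u p.2)) + α₁ * dist (K (u p.1)) (K (u p.2)) ^ 2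
  have tendsto_bound : Tendsto bound atTop (𝓝 0) := by
    have hdist := cauchySeq_iff_tendsto_dist_atTop_0.mp hKu
    rw [← prod_atTop_atTop_eq] at hdist ⊢
    have hfst := hBu.comp (tendsto_fst (g := atTop (α := ι)))
    have hsnd := hBu.comp (tendsto_snd (f := atTop (α := ι)))
    simpa using ((hfst.add hsnd).const_mul 2).add ((hdist.pow 2).const_mul α₁)
  have tendsto_sqrt : Tendsto (fun p ↦ √(bound p / α₀)) atTop (𝓝 0) := by
    simpa using (tendsto_bound.div_const α₀).sqrt
  refine cauchySeq_iff_tendsto_dist_atTop_0.mpr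
    (squeeze_zero (fun _ ↦ dist_nonneg) (fun p ↦ Real.le_sqrt_of_sq_le ?_) tendsto_sqrt)
  exact (le_div_iff₀' hα₀).mpr (mul_dist_sq_le_of_garding hB hGarding _ _)

theorem exists_subseq_tendsto_of_garding [CompleteSpace U] (hB : B.IsNonneg)
    (hK : IsCompactOperator K) (hα₀ : 0 < α₀)
    (hGarding : ∀ u, α₀ * ‖u‖ ^ 2 ≤ B u u + α₁ * ‖K u‖ ^ 2) {u : ℕ → U}
    (hu : Bornology.IsBounded (Set.range u))
    (hBu : Tendsto (fun n ↦ B (u n) (u n)) atTop (𝓝 0)) :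
    ∃ w, ∃ φ : ℕ → ℕ, StrictMono φ ∧ Tendsto (u ∘ φ) atTop (𝓝 w) := by
  obtain ⟨a, φ, hφ, hKu⟩ := exists_subseq_tendsto_of_isCompactOperator hK hu
  have hcauchy : CauchySeq (u ∘ φ) :=
    cauchySeq_of_garding hB hα₀ hGarding (hBu.comp hφ.tendsto_atTop) hKu.cauchySeq
  obtain ⟨w, hw⟩ := cauchySeq_tendsto_of_complete hcauchy
  exact ⟨w, φ, hφ, hw⟩

end Garding

theorem mul_norm_sq_le_apply_self_of_forall_norm_eq_one {U : Type*} [NormedAddCommGroup U]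
    [NormedSpace ℝ U] {B : LinearMap.BilinForm ℝ U} {c : ℝ}
    (hc : ∀ u, ‖u‖ = 1 → c ≤ B u u) (u : U) : c * ‖u‖ ^ 2 ≤ B u u := by
  obtain rfl | hu := eq_or_ne u 0
  · simp
  calc c * ‖u‖ ^ 2 ≤ B (‖u‖⁻¹ • u) (‖u‖⁻¹ • u) * ‖u‖ ^ 2 := by
        gcongr
        exact hc _ (norm_smul_inv_norm hu)
    _ = B u u := by
        have hu_norm : ‖u‖ ≠ 0 := norm_ne_zero_iff.mpr hu
        simp only [map_smul, LinearMap.smul_apply, smul_eq_mul]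
        field_simp

theorem garding_compact_trivialKernel_coercive_general {U V : Type*} [NormedAddCommGroup U]
    [NormedSpace ℝ U] [CompleteSpace U] [SeminormedAddCommGroup V] [NormedSpace ℝ V]
    (B : U →L[ℝ] U →L[ℝ] ℝ) (hnonneg : ∀ u, 0 ≤ B u u) (K : U →ₗ[ℝ] V)
    (hK : IsCompactOperator K) (α₀ α₁ : ℝ) (hα₀ : 0 < α₀)
    (hGarding : ∀ u, α₀ * ‖u‖ ^ 2 ≤ B u u + α₁ * ‖K u‖ ^ 2) (hker : ∀ u, B u u = 0 → u = 0) :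
    ∃ c > 0, ∀ u, c * ‖u‖ ^ 2 ≤ B u u := by
  suffices ∃ c > 0, ∀ u, ‖u‖ = 1 → c ≤ B u u by
    obtain ⟨c, hc, hsphere⟩ := this
    exact ⟨c, hc, mul_norm_sq_le_apply_self_of_forall_norm_eq_one (B := B.toBilinForm) hsphere⟩
  by_contra! hsmall
  choose u hu hBu_lt using fun n : ℕ ↦ hsmall (1 / (n + 1)) Nat.one_div_pos_of_nat
  have hBu : Tendsto (fun n ↦ B (u n) (u n)) atTop (𝓝 0) :=
    squeeze_zero (fun n ↦ hnonneg (u n)) (fun n ↦ (hBu_lt n).le)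
      tendsto_one_div_add_atTop_nhds_zero_nat
  have hbounded : Bornology.IsBounded (Set.range u) :=
    isBounded_iff_forall_norm_le.mpr ⟨1, Set.forall_mem_range.mpr fun n ↦ (hu n).le⟩
  obtain ⟨w, φ, hφ, hw⟩ :=
    exists_subseq_tendsto_of_garding (B := B.toBilinForm) ⟨hnonneg⟩ hK hα₀ hGarding hbounded hBu
  have hw_norm : ‖w‖ = 1 := by
    refine tendsto_nhds_unique hw.norm ?_
    simp only [Function.comp_apply, hu, tendsto_const_nhds]
  have hBw : B w w = 0 := by
    have hcont : Continuous fun x ↦ B x x := by fun_prop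
    exact tendsto_nhds_unique ((hcont.tendsto w).comp hw) (hBu.comp hφ.tendsto_atTop)
  simp [hker w hBw] at hw_norm

/-- Abstract coercivity theorem: a continuous symmetric nonnegative bilinear form on a
real Hilbert space satisfying a Gårding-type inequality (with compact perturbation term)
and having trivial kernel on the diagonal is coercive. -/
theorem garding_compact_trivialKernel_coercive
    {U V : Type*} [NormedAddCommGroup U] [InnerProductSpace ℝ U] [CompleteSpace U]
    [NormedAddCommGroup V] [NormedSpace ℝ V]
    (B : U →L[ℝ] U →L[ℝ] ℝ)
    (hsymm : ∀ u v : U, B u v = B v u)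
    (hnonneg : ∀ u : U, 0 ≤ B u u)
    (K : U →L[ℝ] V) (hK : IsCompactOperator K)
    (α₀ α₁ : ℝ) (hα₀ : 0 < α₀) (hα₁ : 0 < α₁)
    (hGarding : ∀ u : U, α₀ * ‖u‖ ^ 2 ≤ B u u + α₁ * ‖K u‖ ^ 2)
    (hker : ∀ u : U, B u u = 0 → u = 0) :
    ∃ c > 0, ∀ u : U, c * ‖u‖ ^ 2 ≤ B u u :=
  garding_compact_trivialKernel_coercive_general B hnonneg K.toLinearMap hK α₀ α₁ hα₀ hGarding hker
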